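/- Let γᴺ = Σ_{l=1}^{K} γᴺ_l δ_{(uᴺ_l, yᴺ_l)} (with γᴺ_l > 0, Σγᴺ_l = 1) be an optimal solution of the semi-infinite LP min over W_N of ∫ g dγ, with optimal value G*_N, and let ψᴺ ∈ D_N satisfy min_{(u,y)∈U×Y}(∇ψᴺ(y)ᵀ f(u,y) + g(u,y)) = G*_N. Then each concentration point satisfies (uᴺ_l, yᴺ_l) ∈ Argmin over U×Y of ∇ψᴺ(y)ᵀ f(u,y) + g(u,y); in particular yᴺ_l minimizes y ↦ H(∇ψᴺ(y),y) over Y and uᴺ_l = argmin_{u∈U}(∇ψᴺ(yᴺ_l)ᵀ f(u,yᴺ_l) + g(u,yᴺ_l)). -/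

import Mathlib

/-!
Write `F (u, y) = ∇ψᴺ(y)ᵀ f(u, y) + g(u, y)`. Since `ψᴺ` lies in the span of the `φᵢ`, feasibility of
the discrete measure kills the `∇ψᴺ` term, so the weighted average of `F` over the atoms is `G*_N`.
But `G*_N` is a lower bound of `F` on `U × Y` (compactness makes the infimum genuine), and a convex
combination with positive weights of values `≥ G*_N` can equal `G*_N` only if every value does
(`eq_of_convex_combination_eq`). Hence each atom is a global minimizer of `F`, and a joint minimizer
also minimizes in each variable separately (`iInf_eq_of_joint_min`, `sInf_iInf_eq_of_joint_min`).
-/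

open MeasureTheory Set

theorem eq_of_convex_combination_eq {ι : Type*} [Fintype ι] {w a : ι → ℝ} {c : ℝ}
    (hw : ∀ l, 0 < w l) (hw1 : ∑ l, w l = 1) (ha : ∀ l, c ≤ a l)
    (hsum : ∑ l, w l * a l = c) (l : ι) : a l = c := by
  have hzero : ∑ l, w l * (a l - c) = 0 := by
    simp only [mul_sub, Finset.sum_sub_distrib, ← Finset.sum_mul, hw1, hsum]
    ring
  have hl := (Finset.sum_eq_zero_iff_of_nonneg
    (fun i _ => mul_nonneg (hw i).le (sub_nonneg.2 (ha i)))).1 hzero l (Finset.mem_univ l)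
  exact sub_eq_zero.1 ((mul_eq_zero.1 hl).resolve_left (hw l).ne')

section JointMin

variable {U E : Type*} {Y : Set E} {F : U → E → ℝ} {u₀ : U} {y₀ : E}

theorem iInf_eq_of_joint_min (hy₀ : y₀ ∈ Y) (hmin : ∀ u, ∀ y ∈ Y, F u₀ y₀ ≤ F u y) :
    ⨅ u, F u y₀ = F u₀ y₀ :=
  IsLeast.csInf_eq ⟨⟨u₀, rfl⟩, by rintro _ ⟨u, rfl⟩; exact hmin u y₀ hy₀⟩

theorem sInf_iInf_eq_of_joint_min (hy₀ : y₀ ∈ Y) (hmin : ∀ u, ∀ y ∈ Y, F u₀ y₀ ≤ F u y) :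
    sInf ((fun y => ⨅ u, F u y) '' Y) = ⨅ u, F u y₀ := by
  have : Nonempty U := ⟨u₀⟩
  refine IsLeast.csInf_eq ⟨⟨y₀, hy₀, rfl⟩, ?_⟩
  rintro _ ⟨y, hy, rfl⟩
  rw [iInf_eq_of_joint_min hy₀ hmin]
  exact le_ciInf fun u => hmin u y hy

end JointMin

/-- If γᴺ = Σ γᴺ_l δ_{(uᴺ_l,yᴺ_l)} is an optimal solution of the
semi-infinite LP with value G*_N and ψᴺ ∈ D_N satisfies
min_{(u,y)∈U×Y}(∇ψᴺᵀf + g) = G*_N, then every concentration point minimizes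
∇ψᴺ(y)ᵀf(u,y) + g(u,y) over U×Y; in particular yᴺ_l minimizes H(∇ψᴺ(·),·) over Y
and uᴺ_l minimizes u ↦ ∇ψᴺ(yᴺ_l)ᵀf(u,yᴺ_l) + g(u,yᴺ_l). -/
theorem stmt11 {m N K : ℕ} {U : Type*} [MetricSpace U] [CompactSpace U] [Nonempty U]
    (Y : Set (EuclideanSpace ℝ (Fin m))) (hY : IsCompact Y)
    (f : U → EuclideanSpace ℝ (Fin m) → EuclideanSpace ℝ (Fin m))
    (g : U → EuclideanSpace ℝ (Fin m) → ℝ)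
    (hf : Continuous fun p : U × EuclideanSpace ℝ (Fin m) => f p.1 p.2)
    (hg : Continuous fun p : U × EuclideanSpace ℝ (Fin m) => g p.1 p.2)
    (φ : Fin N → EuclideanSpace ℝ (Fin m) → ℝ) (hφ : ∀ i, ContDiff ℝ 1 (φ i))
    (GN : ℝ)
    -- the atoms and weights of the discrete optimal measure γᴺ
    (uN : Fin K → U) (yN : Fin K → EuclideanSpace ℝ (Fin m))
    (hyN : ∀ l, yN l ∈ Y)
    (w : Fin K → ℝ) (hw : ∀ l, 0 < w l) (hw1 : ∑ l, w l = 1)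
    -- γᴺ ∈ W_N : the constraints of the semi-infinite LP hold
    (hfeas : ∀ i : Fin N, ∑ l, w l * fderiv ℝ (φ i) (yN l) (f (uN l) (yN l)) = 0)
    -- γᴺ is optimal with optimal value G*_N
    (hval : ∑ l, w l * g (uN l) (yN l) = GN)
    -- ψᴺ ∈ D_N solves the N-approximating maximin problem
    (lam : Fin N → ℝ)
    (ψN : EuclideanSpace ℝ (Fin m) → ℝ)
    (hψN : ψN = fun z => ∑ i, lam i * φ i z)
    (hdual : sInf ((fun p : U × EuclideanSpace ℝ (Fin m) =>
      fderiv ℝ ψN p.2 (f p.1 p.2) + g p.1 p.2) '' {p | p.2 ∈ Y}) = GN) :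
    ∀ l : Fin K,
      (∀ u' : U, ∀ y' ∈ Y,
        fderiv ℝ ψN (yN l) (f (uN l) (yN l)) + g (uN l) (yN l) ≤
          fderiv ℝ ψN y' (f u' y') + g u' y') ∧
      (⨅ u : U, (fderiv ℝ ψN (yN l) (f u (yN l)) + g u (yN l))) =
        sInf ((fun y => ⨅ u : U, (fderiv ℝ ψN y (f u y) + g u y)) '' Y) ∧
      fderiv ℝ ψN (yN l) (f (uN l) (yN l)) + g (uN l) (yN l) =
        ⨅ u : U, (fderiv ℝ ψN (yN l) (f u (yN l)) + g u (yN l)) := by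
  have hψdiff : ∀ y v, fderiv ℝ ψN y v = ∑ i, lam i * fderiv ℝ (φ i) y v := by
    intro y v
    have hd : HasFDerivAt ψN (∑ i, lam i • fderiv ℝ (φ i) y) y := by
      rw [hψN]
      exact HasFDerivAt.fun_sum fun i _ =>
        (((hφ i).differentiable one_ne_zero) y).hasFDerivAt.const_mul (lam i)
    simp [hd.fderiv]
  have hψ : ContDiff ℝ 1 ψN := by
    rw [hψN]
    exact ContDiff.sum fun i _ => contDiff_const.mul (hφ i)
  have hcont : Continuous fun p : U × EuclideanSpace ℝ (Fin m) =>
      fderiv ℝ ψN p.2 (f p.1 p.2) + g p.1 p.2 :=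
    (((hψ.continuous_fderiv one_ne_zero).comp continuous_snd).clm_apply hf).add hg
  have hcompact : IsCompact {p : U × EuclideanSpace ℝ (Fin m) | p.2 ∈ Y} := by
    have h := (isCompact_univ (X := U)).prod hY
    rwa [Set.univ_prod] at h
  -- Compactness gives boundedness below, so that the real `sInf` is a true lower bound.
  have hlower : ∀ u, ∀ y ∈ Y, GN ≤ fderiv ℝ ψN y (f u y) + g u y := by
    intro u y hy
    rw [← hdual]
    exact csInf_le (hcompact.image hcont).bddBelow ⟨(u, y), hy, rfl⟩
  have havg : ∑ l, w l * (fderiv ℝ ψN (yN l) (f (uN l) (yN l)) + g (uN l) (yN l)) = GN := by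
    have hgrad : ∑ l, w l * fderiv ℝ ψN (yN l) (f (uN l) (yN l)) = 0 := by
      simp only [hψdiff, Finset.mul_sum]
      rw [Finset.sum_comm]
      refine Finset.sum_eq_zero fun i _ => ?_
      simp only [mul_left_comm (w _), ← Finset.mul_sum, hfeas i, mul_zero]
    simp only [mul_add, Finset.sum_add_distrib, hgrad, hval, zero_add]
  intro l
  have hmin : ∀ u, ∀ y ∈ Y, fderiv ℝ ψN (yN l) (f (uN l) (yN l)) + g (uN l) (yN l) ≤
      fderiv ℝ ψN y (f u y) + g u y := by
    rw [eq_of_convex_combination_eq hw hw1 (fun l => hlower (uN l) (yN l) (hyN l)) havg l]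
    exact hlower
  exact ⟨hmin,
    (sInf_iInf_eq_of_joint_min (F := fun u y => fderiv ℝ ψN y (f u y) + g u y)
      (hyN l) hmin).symm,
    (iInf_eq_of_joint_min (F := fun u y => fderiv ℝ ψN y (f u y) + g u y)
      (hyN l) hmin).symm⟩
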